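/- Assume γL² < 1, that there exists ω > 0 with Σ_s D(s)·⟨x(s), v⟩² ≥ ω·‖v‖₂² for every v ∈ ℝᵈ, and set α := (1 − γL²)/(4L³). Let (w_t)_{t≥0} be a sequence in W such that for every t, w_{t+1} is the metric projection of w_t + α·ḡ(w_t) onto W, and let w* ∈ W be a fixed point of this projected update. Then for every T ≥ 0, ‖w* − w_T‖₂² ≤ exp(−T·ω·((1 − γL²)/(2L²))²)·‖w* − w_0‖₂². -/

import Mathlib

open scoped RealInnerProductSpace BigOperators
open Finset

/-- The per-sample TD update
`g(w; s, s') := (f(r(s,s') + γ⟨x(s'), w⟩) − f(⟨x(s), w⟩)) • x(s)`. -/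
noncomputable def tdSample {S : Type*} {d : ℕ} (x : S → EuclideanSpace ℝ (Fin d))
    (r : S → S → ℝ) (γ : ℝ) (f : ℝ → ℝ) (w : EuclideanSpace ℝ (Fin d)) (s s' : S) :
    EuclideanSpace ℝ (Fin d) :=
  (f (r s s' + γ * ⟪x s', w⟫) - f ⟪x s, w⟫) • x s

/-- The expected TD update `ḡ(w) := Σ_{s,s'} D(s) P(s,s') g(w; s, s')`. -/
noncomputable def tdExpected {S : Type*} [Fintype S] {d : ℕ} (D : S → ℝ) (P : S → S → ℝ)
    (x : S → EuclideanSpace ℝ (Fin d)) (r : S → S → ℝ) (γ : ℝ) (f : ℝ → ℝ)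
    (w : EuclideanSpace ℝ (Fin d)) : EuclideanSpace ℝ (Fin d) :=
  ∑ s, ∑ s', (D s * P s s') • tdSample x r γ f w s s'

/-- A nearest point `p` of a convex set to `v` satisfies the obtuse-angle inequality. -/
lemma inner_sub_le_zero_of_forall_norm_sub_le {E : Type*} [NormedAddCommGroup E]
    [InnerProductSpace ℝ E] {W : Set E} (hW : Convex ℝ W) {v p : E} (hp : p ∈ W)
    (h : ∀ u ∈ W, ‖v - p‖ ≤ ‖v - u‖) : ∀ u ∈ W, ⟪v - p, u - p⟫ ≤ 0 := by
  refine (norm_eq_iInf_iff_real_inner_le_zero hW hp).1 (le_antisymm ?_ ?_)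
  · have : Nonempty W := ⟨⟨p, hp⟩⟩
    exact le_ciInf fun u => h u u.2
  · exact ciInf_le ⟨0, by rintro _ ⟨u, rfl⟩; exact norm_nonneg _⟩ (⟨p, hp⟩ : W)

/-- Metric projections onto a convex set are nonexpansive. -/
lemma norm_sub_le_of_forall_norm_sub_le {E : Type*} [NormedAddCommGroup E]
    [InnerProductSpace ℝ E] {W : Set E} (hW : Convex ℝ W) {v v' p p' : E}
    (hp : p ∈ W) (hp' : p' ∈ W) (h : ∀ u ∈ W, ‖v - p‖ ≤ ‖v - u‖)
    (h' : ∀ u ∈ W, ‖v' - p'‖ ≤ ‖v' - u‖) : ‖p - p'‖ ≤ ‖v - v'‖ := by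
  have h1 := inner_sub_le_zero_of_forall_norm_sub_le hW hp h p' hp'
  have h2 := inner_sub_le_zero_of_forall_norm_sub_le hW hp' h' p hp
  have h3 : ⟪v - p, p' - p⟫ + ⟪v' - p', p - p'⟫ = ‖p - p'‖ ^ 2 - ⟪v - v', p - p'⟫ := by
    rw [← real_inner_self_eq_norm_sq]
    simp only [inner_sub_left, inner_sub_right]
    ring
  have h4 := real_inner_le_norm (v - v') (p - p')
  by_contra! hlt
  nlinarith [norm_nonneg (v - v'), norm_nonneg (p - p')]

/-- A strictly increasing function with `|a - b| / L ≤ |f a - f b|` is `1 / L`-strongly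
monotone. -/
lemma strongly_monotone_of_strictMono {L : ℝ} {f : ℝ → ℝ} (hf : StrictMono f)
    (h : ∀ a b : ℝ, (1 / L) * |a - b| ≤ |f a - f b|) (a b : ℝ) :
    (1 / L) * (a - b) ^ 2 ≤ (f a - f b) * (a - b) := by
  have hsign : 0 ≤ (f a - f b) * (a - b) := by
    rcases le_total a b with hab | hab
    · exact mul_nonneg_of_nonpos_of_nonpos (sub_nonpos.2 (hf.monotone hab)) (sub_nonpos.2 hab)
    · exact mul_nonneg (sub_nonneg.2 (hf.monotone hab)) (sub_nonneg.2 hab)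
  rw [← abs_of_nonneg hsign, abs_mul, ← sq_abs, pow_two, ← mul_assoc]
  exact mul_le_mul_of_nonneg_right (h a b) (abs_nonneg _)

/-- The squared norm of a weighted average of vectors `c i • y i` with `‖y i‖ ≤ 1` is at most
the weighted average of `c i ^ 2`. -/
lemma norm_sum_smul_sq_le {ι E : Type*} [Fintype ι] [NormedAddCommGroup E] [NormedSpace ℝ E]
    {p c : ι → ℝ} {y : ι → E} (hp : ∀ i, 0 ≤ p i) (hp1 : ∑ i, p i = 1)
    (hy : ∀ i, ‖y i‖ ≤ 1) : ‖∑ i, p i • c i • y i‖ ^ 2 ≤ ∑ i, p i * c i ^ 2 := by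
  have h1 : ‖∑ i, p i • c i • y i‖ ≤ ∑ i, p i * |c i| := by
    refine norm_sum_le_of_le _ fun i _ => ?_
    rw [norm_smul, norm_smul, Real.norm_of_nonneg (hp i), Real.norm_eq_abs]
    exact mul_le_mul_of_nonneg_left (mul_le_of_le_one_right (abs_nonneg _) (hy i)) (hp i)
  calc ‖∑ i, p i • c i • y i‖ ^ 2 ≤ (∑ i, p i * |c i|) ^ 2 := by gcongr
    _ ≤ ∑ i, p i * |c i| ^ 2 := by
      simpa using (convexOn_pow 2).map_sum_le (fun i _ => hp i) hp1
        (fun i _ => Set.mem_Ici.2 (abs_nonneg (c i)))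
    _ = ∑ i, p i * c i ^ 2 := by simp

/-- The increment of the expected TD update as a sum over pairs of states. -/
lemma tdExpected_sub {S : Type*} [Fintype S] {d : ℕ} (D : S → ℝ) (P : S → S → ℝ)
    (x : S → EuclideanSpace ℝ (Fin d)) (r : S → S → ℝ) (γ : ℝ) (f : ℝ → ℝ)
    (v w : EuclideanSpace ℝ (Fin d)) :
    tdExpected D P x r γ f v - tdExpected D P x r γ f w =
      ∑ i : S × S, (D i.1 * P i.1 i.2) •
        ((f (r i.1 i.2 + γ * ⟪x i.2, v⟫) - f (r i.1 i.2 + γ * ⟪x i.2, w⟫)) -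
          (f ⟪x i.1, v⟫ - f ⟪x i.1, w⟫)) • x i.1 := by
  simp only [tdExpected, tdSample, Fintype.sum_prod_type, ← Finset.sum_sub_distrib]
  refine Finset.sum_congr rfl fun s _ => Finset.sum_congr rfl fun s' _ => ?_
  module

/-- The initial state of a transition is distributed by `D`. -/
lemma sum_transition_fst {S : Type*} [Fintype S] {D : S → ℝ} {P : S → S → ℝ}
    (hP1 : ∀ s, ∑ s', P s s' = 1) (F : S → ℝ) :
    ∑ i : S × S, D i.1 * P i.1 i.2 * F i.1 = ∑ s, D s * F s := by
  simp only [Fintype.sum_prod_type]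
  refine Finset.sum_congr rfl fun s _ => ?_
  rw [← Finset.sum_mul, ← Finset.mul_sum, hP1, mul_one]

/-- Under a stationary distribution the successor state of a transition is distributed by `D`. -/
lemma sum_transition_snd {S : Type*} [Fintype S] {D : S → ℝ} {P : S → S → ℝ}
    (hstat : ∀ s', ∑ s, D s * P s s' = D s') (F : S → ℝ) :
    ∑ i : S × S, D i.1 * P i.1 i.2 * F i.2 = ∑ s, D s * F s := by
  simp only [Fintype.sum_prod_type_right]
  refine Finset.sum_congr rfl fun s _ => ?_
  rw [← Finset.sum_mul, hstat]

section Increment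

variable {S : Type*} [Fintype S] {d : ℕ} {D : S → ℝ} {P : S → S → ℝ}
  {x : S → EuclideanSpace ℝ (Fin d)} {γ L : ℝ} {f : ℝ → ℝ}

/-- The expected TD update is strongly monotone in the feature seminorm. -/
lemma inner_tdExpected_sub_le (r : S → S → ℝ) (hD : ∀ s, 0 ≤ D s) (hP : ∀ s s', 0 ≤ P s s')
    (hP1 : ∀ s, ∑ s', P s s' = 1) (hstat : ∀ s', ∑ s, D s * P s s' = D s')
    (hγ0 : 0 ≤ γ) (hL : 1 ≤ L) (hf : StrictMono f)
    (hfLip : ∀ a b : ℝ, (1 / L) * |a - b| ≤ |f a - f b| ∧ |f a - f b| ≤ L * |a - b|)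
    (v w : EuclideanSpace ℝ (Fin d)) :
    ⟪v - w, tdExpected D P x r γ f v - tdExpected D P x r γ f w⟫ ≤
      -((1 - γ * L ^ 2) / L) * ∑ s, D s * ⟪x s, v - w⟫ ^ 2 := by
  have hsplit : -((1 - γ * L ^ 2) / L) * ∑ s, D s * ⟪x s, v - w⟫ ^ 2 =
      ∑ i : S × S, D i.1 * P i.1 i.2 * (L * γ / 2 * ⟪x i.2, v - w⟫ ^ 2 +
        (L * γ / 2 - 1 / L) * ⟪x i.1, v - w⟫ ^ 2) := by
    simp only [mul_add, Finset.sum_add_distrib]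
    rw [sum_transition_fst hP1 fun s => (L * γ / 2 - 1 / L) * ⟪x s, v - w⟫ ^ 2,
      sum_transition_snd hstat fun s => L * γ / 2 * ⟪x s, v - w⟫ ^ 2,
      ← Finset.sum_add_distrib, Finset.mul_sum]
    refine Finset.sum_congr rfl fun s _ => ?_
    field_simp
    ring
  rw [hsplit, tdExpected_sub, inner_sum]
  refine Finset.sum_le_sum fun i _ => ?_
  rw [inner_smul_right, inner_smul_right, real_inner_comm (x i.1)]
  refine mul_le_mul_of_nonneg_left ?_ (mul_nonneg (hD _) (hP _ _))
  have hmono := strongly_monotone_of_strictMono hf (fun a b => (hfLip a b).1)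
    ⟪x i.1, v⟫ ⟪x i.1, w⟫
  have hlip := (hfLip (r i.1 i.2 + γ * ⟪x i.2, v⟫) (r i.1 i.2 + γ * ⟪x i.2, w⟫)).2
  rw [show r i.1 i.2 + γ * ⟪x i.2, v⟫ - (r i.1 i.2 + γ * ⟪x i.2, w⟫) =
    γ * ⟪x i.2, v - w⟫ by rw [inner_sub_right]; ring, abs_mul, abs_of_nonneg hγ0] at hlip
  rw [← inner_sub_right] at hmono
  generalize f (r i.1 i.2 + γ * ⟪x i.2, v⟫) - f (r i.1 i.2 + γ * ⟪x i.2, w⟫) = a at *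
  generalize f ⟪x i.1, v⟫ - f ⟪x i.1, w⟫ = b at *
  generalize ⟪x i.1, v - w⟫ = z at *
  generalize ⟪x i.2, v - w⟫ = z' at *
  have h1 : a * z ≤ L * (γ * |z'|) * |z| :=
    (le_abs_self _).trans ((abs_mul a z).trans_le
      (mul_le_mul_of_nonneg_right hlip (abs_nonneg z)))
  have h2 : L * γ * (2 * |z'| * |z|) ≤ L * γ * (z' ^ 2 + z ^ 2) := by
    refine mul_le_mul_of_nonneg_left ?_ (by positivity)
    simpa using two_mul_le_add_sq |z'| |z|
  linarith

/-- The expected TD update is Lipschitz with respect to the feature seminorm. -/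
lemma norm_tdExpected_sub_sq_le (r : S → S → ℝ) (hD : ∀ s, 0 ≤ D s) (hD1 : ∑ s, D s = 1)
    (hP : ∀ s s', 0 ≤ P s s') (hP1 : ∀ s, ∑ s', P s s' = 1)
    (hstat : ∀ s', ∑ s, D s * P s s' = D s') (hx : ∀ s, ‖x s‖ ≤ 1)
    (hγ0 : 0 ≤ γ) (hγ1 : γ ≤ 1) (hL : 0 ≤ L) (hfLip : ∀ a b : ℝ, |f a - f b| ≤ L * |a - b|)
    (v w : EuclideanSpace ℝ (Fin d)) :
    ‖tdExpected D P x r γ f v - tdExpected D P x r γ f w‖ ^ 2 ≤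
      4 * L ^ 2 * ∑ s, D s * ⟪x s, v - w⟫ ^ 2 := by
  have hsplit : 4 * L ^ 2 * ∑ s, D s * ⟪x s, v - w⟫ ^ 2 =
      ∑ i : S × S, D i.1 * P i.1 i.2 * (2 * L ^ 2 * ⟪x i.2, v - w⟫ ^ 2 +
        2 * L ^ 2 * ⟪x i.1, v - w⟫ ^ 2) := by
    simp only [mul_add, Finset.sum_add_distrib]
    rw [sum_transition_fst hP1 fun s => 2 * L ^ 2 * ⟪x s, v - w⟫ ^ 2,
      sum_transition_snd hstat fun s => 2 * L ^ 2 * ⟪x s, v - w⟫ ^ 2,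
      ← Finset.sum_add_distrib, Finset.mul_sum]
    exact Finset.sum_congr rfl fun s _ => by ring
  have hp1 : ∑ i : S × S, D i.1 * P i.1 i.2 = 1 := by
    simpa [hD1] using sum_transition_fst (D := D) hP1 fun _ => 1
  rw [hsplit, tdExpected_sub]
  refine (norm_sum_smul_sq_le (fun i => mul_nonneg (hD _) (hP _ _)) hp1
    fun i => hx i.1).trans ?_
  refine Finset.sum_le_sum fun i _ => ?_
  refine mul_le_mul_of_nonneg_left ?_ (mul_nonneg (hD _) (hP _ _))
  have hb := hfLip ⟪x i.1, v⟫ ⟪x i.1, w⟫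
  have ha := hfLip (r i.1 i.2 + γ * ⟪x i.2, v⟫) (r i.1 i.2 + γ * ⟪x i.2, w⟫)
  rw [show r i.1 i.2 + γ * ⟪x i.2, v⟫ - (r i.1 i.2 + γ * ⟪x i.2, w⟫) =
    γ * ⟪x i.2, v - w⟫ by rw [inner_sub_right]; ring, abs_mul, abs_of_nonneg hγ0] at ha
  rw [← inner_sub_right] at hb
  replace ha := ha.trans (mul_le_mul_of_nonneg_left
    (mul_le_of_le_one_left (abs_nonneg _) hγ1) hL)
  generalize f (r i.1 i.2 + γ * ⟪x i.2, v⟫) - f (r i.1 i.2 + γ * ⟪x i.2, w⟫) = a at *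
  generalize f ⟪x i.1, v⟫ - f ⟪x i.1, w⟫ = b at *
  have ha2 := pow_le_pow_left₀ (abs_nonneg a) ha 2
  have hb2 := pow_le_pow_left₀ (abs_nonneg b) hb 2
  rw [mul_pow, sq_abs, sq_abs] at ha2 hb2
  nlinarith [sq_nonneg (a + b)]

end Increment

/-- last-iterate exponential convergence of the projected expected TD
update: `‖w* − w_T‖² ≤ exp(−Tω((1 − γL²)/(2L²))²) ‖w* − w₀‖²`. -/
theorem td_expected_update_last_iterate_rate {S : Type*} [Fintype S] [Nonempty S] {d : ℕ}
    (D : S → ℝ) (P : S → S → ℝ) (x : S → EuclideanSpace ℝ (Fin d))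
    (r : S → S → ℝ) (γ L : ℝ) (f : ℝ → ℝ)
    (hD : ∀ s, 0 ≤ D s) (hD1 : ∑ s, D s = 1)
    (hP : ∀ s s', 0 ≤ P s s') (hP1 : ∀ s, ∑ s', P s s' = 1)
    (hstat : ∀ s', ∑ s, D s * P s s' = D s')
    (hx : ∀ s, ‖x s‖ ≤ 1)
    (hγ0 : 0 ≤ γ) (hγ1 : γ < 1) (hL : 1 ≤ L)
    (hf : StrictMono f)
    (hfLip : ∀ a b : ℝ, (1 / L) * |a - b| ≤ |f a - f b| ∧ |f a - f b| ≤ L * |a - b|)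
    (W : Set (EuclideanSpace ℝ (Fin d)))
    (hWne : W.Nonempty) (hWcpt : IsCompact W) (hWcvx : Convex ℝ W)
    (hγL : γ * L ^ 2 < 1)
    (ω : ℝ) (hω : 0 < ω)
    (hcov : ∀ v : EuclideanSpace ℝ (Fin d), ω * ‖v‖ ^ 2 ≤ ∑ s, D s * ⟪x s, v⟫ ^ 2)
    (w : ℕ → EuclideanSpace ℝ (Fin d)) (hwW : ∀ t, w t ∈ W)
    (hupd : ∀ t, ∀ u ∈ W,
      ‖w t + ((1 - γ * L ^ 2) / (4 * L ^ 3)) • tdExpected D P x r γ f (w t) - w (t + 1)‖ ≤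
        ‖w t + ((1 - γ * L ^ 2) / (4 * L ^ 3)) • tdExpected D P x r γ f (w t) - u‖)
    (wstar : EuclideanSpace ℝ (Fin d)) (hwstar : wstar ∈ W)
    (hfix : ∀ u ∈ W,
      ‖wstar + ((1 - γ * L ^ 2) / (4 * L ^ 3)) • tdExpected D P x r γ f wstar - wstar‖ ≤
        ‖wstar + ((1 - γ * L ^ 2) / (4 * L ^ 3)) • tdExpected D P x r γ f wstar - u‖)
    (T : ℕ) :
    ‖wstar - w T‖ ^ 2 ≤
      Real.exp (-(T : ℝ) * ω * ((1 - γ * L ^ 2) / (2 * L ^ 2)) ^ 2) *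
        ‖wstar - w 0‖ ^ 2 := by
  set α := (1 - γ * L ^ 2) / (4 * L ^ 3) with hα
  set g := tdExpected D P x r γ f
  have hL0 : 0 < L := by linarith
  have hα0 : 0 ≤ α := div_nonneg (by linarith) (by positivity)
  have hstep : ∀ t, ‖wstar - w (t + 1)‖ ^ 2 ≤
      Real.exp (-(ω * ((1 - γ * L ^ 2) / (2 * L ^ 2)) ^ 2)) * ‖wstar - w t‖ ^ 2 := by
    intro t
    have hproj := norm_sub_le_of_forall_norm_sub_le hWcvx hwstar (hwW (t + 1)) hfix (hupd t)
    have hinner := inner_tdExpected_sub_le (x := x) r hD hP hP1 hstat hγ0 hL hf hfLip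
      wstar (w t)
    have hnorm := norm_tdExpected_sub_sq_le r hD hD1 hP hP1 hstat hx hγ0 hγ1.le hL0.le
      (fun a b => (hfLip a b).2) wstar (w t)
    have hξ := hcov (wstar - w t)
    set ξ := ∑ s, D s * ⟪x s, wstar - w t⟫ ^ 2
    calc ‖wstar - w (t + 1)‖ ^ 2
        ≤ ‖wstar + α • g wstar - (w t + α • g (w t))‖ ^ 2 := by gcongr
      _ = ‖(wstar - w t) + α • (g wstar - g (w t))‖ ^ 2 := by congr 2; module
      _ = ‖wstar - w t‖ ^ 2 + 2 * (α * ⟪wstar - w t, g wstar - g (w t)⟫) +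
          α ^ 2 * ‖g wstar - g (w t)‖ ^ 2 := by
        rw [norm_add_sq_real, inner_smul_right, norm_smul, mul_pow, Real.norm_eq_abs, sq_abs]
      _ ≤ ‖wstar - w t‖ ^ 2 + 2 * (α * (-((1 - γ * L ^ 2) / L) * ξ)) +
          α ^ 2 * (4 * L ^ 2 * ξ) := by gcongr
      _ = ‖wstar - w t‖ ^ 2 - ((1 - γ * L ^ 2) / (2 * L ^ 2)) ^ 2 * ξ := by
        rw [hα]; field_simp; ring
      _ ≤ ‖wstar - w t‖ ^ 2 -
          ((1 - γ * L ^ 2) / (2 * L ^ 2)) ^ 2 * (ω * ‖wstar - w t‖ ^ 2) := by gcongr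
      _ = (-(ω * ((1 - γ * L ^ 2) / (2 * L ^ 2)) ^ 2) + 1) * ‖wstar - w t‖ ^ 2 := by ring
      _ ≤ _ := by gcongr; exact Real.add_one_le_exp _
  induction T with
  | zero => simp
  | succ n ih =>
    refine (hstep n).trans ((mul_le_mul_of_nonneg_left ih (Real.exp_nonneg _)).trans_eq ?_)
    rw [← mul_assoc, ← Real.exp_add]
    congr 2
    push_cast
    ring
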